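/- Let f be a Δ-function on ω₂. Then every uncountable family F of conditions in P_f contains two elements which are good twins. Consequently every uncountable subset of P_f contains two compatible conditions, i.e. P_f satisfies the countable chain condition. -/

import Mathlib

attribute [local instance] Classical.propDecidable

noncomputable section

/-- The second uncountable cardinal ω₂, as an ordinal. -/
def omega2 : Ordinal := (Cardinal.aleph 2).ord

/-- The operation `x * y` on nonempty finite sets of ordinals with `max x ≠ max y`:
`x \ y` if `max x ∈ y`, `y \ x` if `max y ∈ x`, and `x ∩ y` otherwise. -/
def ostar (x y : Finset Ordinal) : Finset Ordinal :=
  if ∃ m ∈ y, x.max = (m : WithBot Ordinal) then x \ y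
  else if ∃ m ∈ x, y.max = (m : WithBot Ordinal) then y \ x
  else x ∩ y

/-- The conditions of the poset `P_f`: triples `(a, h, i)` where `a` is a finite
subset of ω₂, `h : a → 𝒫(a)` with `max (h ξ) = ξ`, `i : [a]² → 𝒫(a)` with
`i {ξ,η} ⊆ f {ξ,η}`, and `h ξ * h η ⊆ ⋃ {h ν : ν ∈ i {ξ,η}}`. -/
structure PfCond (f : Ordinal → Ordinal → Set Ordinal) where
  a : Finset Ordinal
  h : Ordinal → Finset Ordinal
  i : Ordinal → Ordinal → Finset Ordinal
  a_lt : ∀ ξ ∈ a, ξ < omega2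
  h_sub : ∀ ξ ∈ a, h ξ ⊆ a
  h_mem : ∀ ξ ∈ a, ξ ∈ h ξ
  h_le : ∀ ξ ∈ a, ∀ η ∈ h ξ, η ≤ ξ
  i_symm : ∀ ξ η, i ξ η = i η ξ
  i_sub_f : ∀ ξ ∈ a, ∀ η ∈ a, ξ ≠ η → ∀ ν ∈ i ξ η, ν ∈ f ξ η
  i_sub_a : ∀ ξ ∈ a, ∀ η ∈ a, ξ ≠ η → i ξ η ⊆ a
  star_cond : ∀ ξ ∈ a, ∀ η ∈ a, ξ ≠ η → ostar (h ξ) (h η) ⊆ (i ξ η).biUnion h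

/-- The order on `P_f`: `p ≤ q` iff `a^p ⊇ a^q`, `h^p(ξ) ∩ a^q = h^q(ξ)` for
`ξ ∈ a^q`, and `i^p` extends `i^q`. -/
def PfLe {f : Ordinal → Ordinal → Set Ordinal} (p q : PfCond f) : Prop :=
  q.a ⊆ p.a ∧ (∀ ξ ∈ q.a, p.h ξ ∩ q.a = q.h ξ) ∧
    ∀ ξ ∈ q.a, ∀ η ∈ q.a, ξ ≠ η → p.i ξ η = q.i ξ η

/-- Two finite subsets `x` and `y` of ω₂ are good for `f`. -/
def GoodFor (f : Ordinal → Ordinal → Set Ordinal) (x y : Finset Ordinal) : Prop :=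
  ∀ α ∈ x ∩ y, ∀ β ∈ x \ y, ∀ γ ∈ y \ x,
    ((α < β ∧ α < γ) → α ∈ f β γ) ∧
    (α < β → f α γ ⊆ f β γ) ∧
    (α < γ → f α β ⊆ f γ β)

/-- `p` and `p'` are good twins: the natural order preserving bijection between
`a^p` and `a^{p'}` is an isomorphism of the conditions fixing `a^p ∩ a^{p'}`,
`i` and `i'` agree on pairs from `a^p ∩ a^{p'}`, and `a^p`, `a^{p'}` are good
for `f`. -/
def GoodTwins {f : Ordinal → Ordinal → Set Ordinal} (p p' : PfCond f) : Prop :=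
  (∃ e : Ordinal → Ordinal,
    Set.BijOn e ↑p.a ↑p'.a ∧
    (∀ ξ ∈ p.a, ∀ η ∈ p.a, ξ < η → e ξ < e η) ∧
    (∀ ξ ∈ p.a ∩ p'.a, e ξ = ξ) ∧
    (∀ ξ ∈ p.a, p'.h (e ξ) = (p.h ξ).image e) ∧
    (∀ ξ ∈ p.a, ∀ η ∈ p.a, ξ ≠ η → p'.i (e ξ) (e η) = (p.i ξ η).image e)) ∧
  (∀ ξ ∈ p.a ∩ p'.a, ∀ η ∈ p.a ∩ p'.a, ξ ≠ η → p.i ξ η = p'.i ξ η) ∧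
  GoodFor f p.a p'.a

/-- `δ` is the ordinal `δ_η = min {δ ∈ a^p ∩ a^{p'} : η ∈ h^p(δ) ∪ h^{p'}(δ)}`. -/
def DeltaIs {f : Ordinal → Ordinal → Set Ordinal} (p p' : PfCond f)
    (η δ : Ordinal) : Prop :=
  δ ∈ p.a ∩ p'.a ∧ η ∈ p.h δ ∪ p'.h δ ∧
    ∀ δ' ∈ p.a ∩ p'.a, η ∈ p.h δ' ∪ p'.h δ' → δ ≤ δ'

/-- `f` is a Δ-function: every uncountable family of finite subsets of ω₂
contains two sets which are good for `f`. -/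
def IsDeltaFunction (f : Ordinal → Ordinal → Set Ordinal) : Prop :=
  ∀ F : Set (Finset Ordinal), (∀ x ∈ F, ∀ ξ ∈ x, ξ < omega2) → ¬ F.Countable →
    ∃ x ∈ F, ∃ y ∈ F, x ≠ y ∧ GoodFor f x y

/-!
Enumerate the support of each condition increasingly. Countably many patterns describe how `h` and
`i` act on positions, so uncountably many conditions share one, and among these the enumerations of
uncountably many form a Δ-system. Its root is closed under `i`, as `f` has countable values while
the entries outside the root are pairwise distinct; hence any two members whose supports are good
for `f` are good twins.

Good twins `p` and `q` are amalgamated on `a^p ∪ a^q`. For `ξ ∈ a^p`, put `ζ ∈ a^q` into the new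
`h(ξ)` iff `δ_ζ ∈ h^p(ξ)`, so that on `a^p` the set `h` treats `ζ` exactly as it treats `δ_ζ`, and
the star condition is inherited on pairs from `a^p`. On a pair with one element in `a^p \ a^q` and
the other in `a^q \ a^p` take the largest possible `i`; goodness for `f` makes it contain both the
small elements of the root and the values of `i` at small elements of the root.
-/

section DeltaSystem

variable {ι κ X : Type*}

theorem exists_uncountable_pairwise {R : ι → ι → Prop} (hR : ∀ i j, R i j → R j i) {J : Set ι}
    (hJ : ¬ J.Countable) (hcount : ∀ i ∈ J, {j ∈ J | ¬ R i j}.Countable) :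
    ∃ M ⊆ J, ¬ M.Countable ∧ M.Pairwise R := by
  obtain ⟨M, hM⟩ := zorn_subset {M : Set ι | M ⊆ J ∧ M.Pairwise R} fun c hc hchain =>
    ⟨⋃₀ c, ⟨Set.sUnion_subset fun t ht => (hc ht).1,
      (Set.pairwise_sUnion hchain.directedOn).2 fun t ht => (hc ht).2⟩,
      fun t ht => Set.subset_sUnion_of_mem ht⟩
  obtain ⟨hMJ, hpair⟩ := hM.prop
  refine ⟨M, hMJ, fun hMc => hJ ?_, hpair⟩
  refine (hMc.union (hMc.biUnion fun i hi => hcount i (hMJ hi))).mono fun j hj => ?_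
  by_contra hnot
  obtain ⟨hjM, hjR⟩ := not_or.1 hnot
  have hRj : ∀ i ∈ M, R i j := fun i hi => by
    by_contra hij
    exact hjR (Set.mem_biUnion hi ⟨hj, hij⟩)
  exact hjM (hM.le_of_ge ⟨Set.insert_subset hj hMJ,
    hpair.insert fun i hi _ => ⟨hR i j (hRj i hi), hRj i hi⟩⟩ (Set.subset_insert j M)
    (Set.mem_insert j M))

theorem exists_uncountable_maximal_agreement [Finite κ] {S : Set ι} (hS : ¬ S.Countable)
    (s : ι → κ → X) :
    ∃ J ⊆ S, ∃ K : Set κ, ¬ J.Countable ∧ (∀ i ∈ J, ∀ j ∈ J, ∀ k ∈ K, s i k = s j k) ∧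
      ∀ k ∉ K, ∀ x, {i ∈ J | s i k = x}.Countable := by
  let R : Set (Set κ) := {K | ∃ J ⊆ S, ¬ J.Countable ∧ ∀ i ∈ J, ∀ j ∈ J, ∀ k ∈ K, s i k = s j k}
  have hne : R.Nonempty := ⟨∅, S, subset_rfl, hS, by simp⟩
  obtain ⟨K, hK⟩ := R.toFinite.exists_maximal hne
  obtain ⟨J, hJS, hJ, hagree⟩ := hK.prop
  refine ⟨J, hJS, K, hJ, hagree, fun k hk x => ?_⟩
  by_contra hx
  have hins : insert k K ∈ R := by
    refine ⟨_, fun i hi => hJS hi.1, hx, ?_⟩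
    rintro i ⟨hi, hik⟩ j ⟨hj, hjk⟩ l (rfl | hl)
    · exact hik.trans hjk.symm
    · exact hagree i hi j hj l hl
  exact hk (hK.le_of_ge hins (Set.subset_insert k K) (Set.mem_insert k K))

/-- The sequences `s i`, for `i ∈ M`, form a Δ-system with root `K`. The root is a set of positions:
the sequences agree there, and outside it they share no value, not even at different positions. -/
structure IsDeltaSystem (s : ι → κ → X) (M : Set ι) (K : Set κ) : Prop where
  agree : ∀ i ∈ M, ∀ j ∈ M, ∀ k ∈ K, s i k = s j k
  disjoint : M.Pairwise fun i j => ∀ k ∉ K, ∀ l ∉ K, s i k ≠ s j l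

variable {s : ι → κ → X} {M : Set ι} {K : Set κ}

theorem IsDeltaSystem.injOn (h : IsDeltaSystem s M K) {k : κ} (hk : k ∉ K) :
    M.InjOn (s · k) := fun i hi j hj hij => by
  by_contra hne
  exact h.disjoint hi hj hne k hk k hk hij

theorem exists_isDeltaSystem [Finite κ] {S : Set ι} (hS : ¬ S.Countable) (s : ι → κ → X) :
    ∃ M ⊆ S, ∃ K, ¬ M.Countable ∧ IsDeltaSystem s M K := by
  obtain ⟨J, hJS, K, hJ, hagree, hfiber⟩ := exists_uncountable_maximal_agreement hS s
  have hmeet : ∀ i ∈ J, {j ∈ J | ¬ ∀ k ∉ K, ∀ l ∉ K, s i k ≠ s j l}.Countable := fun i _ => by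
    have hunion : (⋃ k : κ, ⋃ l ∈ Kᶜ, {j ∈ J | s j l = s i k}).Countable :=
      Set.countable_iUnion fun k => (Set.to_countable Kᶜ).biUnion fun l hl => hfiber l hl (s i k)
    refine hunion.mono ?_
    rintro j ⟨hj, hij⟩
    push Not at hij
    obtain ⟨k, -, l, hl, hkl⟩ := hij
    exact Set.mem_iUnion_of_mem k (Set.mem_biUnion hl ⟨hj, hkl.symm⟩)
  obtain ⟨M, hMJ, hM, hdisj⟩ := exists_uncountable_pairwise
    (fun i j hij k hk l hl hkl => hij l hl k hk hkl.symm) hJ hmeet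
  exact ⟨M, hMJ.trans hJS, K, hM, fun i hi j hj => hagree i (hMJ hi) j (hMJ hj), hdisj⟩

end DeltaSystem

section Twins

variable {f : Ordinal → Ordinal → Set Ordinal}

theorem GoodFor.refl (x : Finset Ordinal) : GoodFor f x x := fun _ _ β hβ => by simp at hβ

theorem IsDeltaFunction.exists_goodFor (hΔ : IsDeltaFunction f) {ι : Type*} {M : Set ι}
    (hM : ¬ M.Countable) (a : ι → Finset Ordinal) (ha : ∀ i ∈ M, ∀ ξ ∈ a i, ξ < omega2) :
    ∃ i ∈ M, ∃ j ∈ M, i ≠ j ∧ GoodFor f (a i) (a j) := by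
  by_cases hinj : M.InjOn a
  · obtain ⟨_, ⟨i, hi, rfl⟩, _, ⟨j, hj, rfl⟩, hne, hgood⟩ :=
      hΔ (a '' M) (Set.forall_mem_image.2 ha)
        fun h => hM (Set.countable_of_injective_of_countable_image hinj h)
    exact ⟨i, hi, j, hj, ne_of_apply_ne a hne, hgood⟩
  · simp only [Set.InjOn, not_forall] at hinj
    obtain ⟨i, hi, j, hj, heq, hne⟩ := hinj
    exact ⟨i, hi, j, hj, hne, heq ▸ GoodFor.refl (a i)⟩

/-- `s` enumerates the support of `p` increasingly, and `u` and `v` are `h` and `i` transported to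
positions in this enumeration. -/
structure PfCond.HasPattern (p : PfCond f) {n : ℕ} (s : Fin n → Ordinal)
    (u : Fin n → Finset (Fin n)) (v : Fin n → Fin n → Finset (Fin n)) : Prop where
  strictMono : StrictMono s
  range_eq : Set.range s = p.a
  h_eq : ∀ k, p.h (s k) = (u k).image s
  i_eq : ∀ k l, k ≠ l → p.i (s k) (s l) = (v k l).image s

theorem PfCond.exists_hasPattern (p : PfCond f) :
    ∃ (n : ℕ) (u : Fin n → Finset (Fin n)) (v : Fin n → Fin n → Finset (Fin n))
      (s : Fin n → Ordinal), p.HasPattern s u v := by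
  let s := p.a.orderEmbOfFin rfl
  have hrange : Set.range s = p.a := p.a.range_orderEmbOfFin rfl
  have hs : ∀ k, s k ∈ p.a := p.a.orderEmbOfFin_mem rfl
  have hpull : ∀ A ⊆ p.a, ∃ B : Finset (Fin p.a.card), A = B.image s := fun A hA => by
    rw [← Finset.coe_subset, ← hrange, ← Set.image_univ, Finset.subset_set_image_iff] at hA
    obtain ⟨B, -, hB⟩ := hA
    exact ⟨B, hB.symm⟩
  choose! pull hpull using hpull
  exact ⟨_, fun k => pull (p.h (s k)), fun k l => pull (p.i (s k) (s l)), s, s.strictMono, hrange,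
    fun k => hpull _ (p.h_sub _ (hs k)),
    fun k l hkl => hpull _ (p.i_sub_a _ (hs k) _ (hs l) (s.injective.ne hkl))⟩

theorem exists_uncountable_hasPattern {F : Set (PfCond f)} (hF : ¬ F.Countable) :
    ∃ (n : ℕ) (u : Fin n → Finset (Fin n)) (v : Fin n → Fin n → Finset (Fin n)),
      ¬ {p ∈ F | ∃ s, p.HasPattern s u v}.Countable := by
  by_contra! hcount
  refine hF ((Set.countable_iUnion fun n => Set.countable_iUnion fun u =>
    Set.countable_iUnion (hcount n u)).mono fun p hp => ?_)
  obtain ⟨n, u, v, hs⟩ := p.exists_hasPattern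
  exact Set.mem_iUnion_of_mem n (Set.mem_iUnion_of_mem u (Set.mem_iUnion_of_mem v ⟨hp, hs⟩))

namespace PfCond.HasPattern

variable {p q : PfCond f} {n : ℕ} {s t : Fin n → Ordinal} {u : Fin n → Finset (Fin n)}
  {v : Fin n → Fin n → Finset (Fin n)} {K : Set (Fin n)}

theorem mem_iff (hp : p.HasPattern s u v) {ξ : Ordinal} : ξ ∈ p.a ↔ ∃ k, s k = ξ := by
  rw [← Finset.mem_coe, ← hp.range_eq, Set.mem_range]

theorem apply_mem (hp : p.HasPattern s u v) (k : Fin n) : s k ∈ p.a := hp.mem_iff.2 ⟨k, rfl⟩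

theorem exists_mem_root (hp : p.HasPattern s u v) (hq : q.HasPattern t u v)
    (hagree : ∀ k ∈ K, s k = t k) (hdisj : ∀ k ∉ K, ∀ l ∉ K, s k ≠ t l) {ξ : Ordinal}
    (hξ : ξ ∈ p.a ∩ q.a) : ∃ k ∈ K, s k = ξ := by
  obtain ⟨hξp, hξq⟩ := Finset.mem_inter.1 hξ
  obtain ⟨k, rfl⟩ := hp.mem_iff.1 hξp
  obtain ⟨l, hl⟩ := hq.mem_iff.1 hξq
  by_cases hk : k ∈ K
  · exact ⟨k, hk, rfl⟩
  by_cases hlK : l ∈ K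
  · exact ⟨l, hlK, (hagree l hlK).trans hl⟩
  · exact absurd hl.symm (hdisj k hk l hlK)

theorem i_eq_of_agree (hp : p.HasPattern s u v) (hq : q.HasPattern t u v)
    (hagree : ∀ k ∈ K, s k = t k) {k l : Fin n} (hk : k ∈ K) (hl : l ∈ K) (hkl : k ≠ l)
    (hclosed : ∀ m ∈ v k l, m ∈ K) : p.i (s k) (s l) = q.i (s k) (s l) := by
  rw [hp.i_eq k l hkl, hagree k hk, hagree l hl, hq.i_eq k l hkl]
  exact Finset.image_congr fun m hm => hagree m (hclosed m hm)

theorem goodTwins (hp : p.HasPattern s u v) (hq : q.HasPattern t u v)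
    (hagree : ∀ k ∈ K, s k = t k) (hdisj : ∀ k ∉ K, ∀ l ∉ K, s k ≠ t l)
    (hclosed : ∀ k ∈ K, ∀ l ∈ K, k ≠ l → ∀ m ∈ v k l, m ∈ K) (hgood : GoodFor f p.a q.a) :
    GoodTwins p q := by
  let e : Ordinal → Ordinal := Function.extend s t id
  have hes : e ∘ s = t := Function.extend_comp hp.strictMono.injective t id
  have he : ∀ k, e (s k) = t k := congrFun hes
  have hroot : ∀ ξ ∈ p.a ∩ q.a, ∃ k ∈ K, s k = ξ := fun ξ => hp.exists_mem_root hq hagree hdisj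
  have hbij : Set.BijOn e p.a q.a := by
    rw [← hp.range_eq, ← hq.range_eq, ← hes, Set.range_comp]
    exact (Function.Injective.injOn_range (hes ▸ hq.strictMono.injective)).bijOn_image
  refine ⟨⟨e, hbij, fun ξ hξ η hη hξη => ?_, fun ξ hξ => ?_, fun ξ hξ => ?_,
    fun ξ hξ η hη hne => ?_⟩, fun ξ hξ η hη hne => ?_, hgood⟩
  · obtain ⟨k, rfl⟩ := hp.mem_iff.1 hξ
    obtain ⟨l, rfl⟩ := hp.mem_iff.1 hη
    rw [he, he]
    exact hq.strictMono (hp.strictMono.lt_iff_lt.1 hξη)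
  · obtain ⟨k, hk, rfl⟩ := hroot ξ hξ
    rw [he, hagree k hk]
  · obtain ⟨k, rfl⟩ := hp.mem_iff.1 hξ
    rw [he, hq.h_eq, hp.h_eq, Finset.image_image, hes]
  · obtain ⟨k, rfl⟩ := hp.mem_iff.1 hξ
    obtain ⟨l, rfl⟩ := hp.mem_iff.1 hη
    have hkl : k ≠ l := ne_of_apply_ne s hne
    rw [he, he, hq.i_eq k l hkl, hp.i_eq k l hkl, Finset.image_image, hes]
  · obtain ⟨k, hk, rfl⟩ := hroot ξ hξ
    obtain ⟨l, hl, rfl⟩ := hroot η hη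
    have hkl : k ≠ l := ne_of_apply_ne s hne
    exact hp.i_eq_of_agree hq hagree hk hl hkl (hclosed k hk l hl hkl)

theorem root_closed (hcount : ∀ α β, (f α β).Countable) {M : Set (PfCond f)}
    (hM : ¬ M.Countable) {s : PfCond f → Fin n → Ordinal}
    (hs : ∀ p ∈ M, p.HasPattern (s p) u v) (hK : IsDeltaSystem s M K) {k l m : Fin n}
    (hk : k ∈ K) (hl : l ∈ K) (hkl : k ≠ l) (hm : m ∈ v k l) : m ∈ K := by
  by_contra hmK
  obtain ⟨p, hp⟩ : M.Nonempty := Set.nonempty_iff_ne_empty.2 fun h => hM (h ▸ Set.countable_empty)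
  have hmaps : M.MapsTo (s · m) (f (s p k) (s p l)) := fun q hq => by
    have hmi : s q m ∈ q.i (s q k) (s q l) := by
      rw [(hs q hq).i_eq k l hkl]
      exact Finset.mem_image_of_mem _ hm
    have hmf := q.i_sub_f _ ((hs q hq).apply_mem k) _ ((hs q hq).apply_mem l)
      ((hs q hq).strictMono.injective.ne hkl) _ hmi
    rwa [hK.agree q hq p hp k hk, hK.agree q hq p hp l hl] at hmf
  exact hM (hmaps.countable_of_injOn (hK.injOn hmK) (hcount _ _))

end PfCond.HasPattern

theorem exists_goodTwins (hcount : ∀ α β, (f α β).Countable) (hΔ : IsDeltaFunction f)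
    {F : Set (PfCond f)} (hF : ¬ F.Countable) : ∃ p ∈ F, ∃ q ∈ F, p ≠ q ∧ GoodTwins p q := by
  obtain ⟨n, u, v, hS⟩ := exists_uncountable_hasPattern hF
  choose! s hs using fun p (hp : p ∈ {p ∈ F | ∃ s, p.HasPattern s u v}) => hp.2
  obtain ⟨M, hMS, K, hM, hK⟩ := exists_isDeltaSystem hS s
  have hpattern : ∀ p ∈ M, p.HasPattern (s p) u v := fun p hp => hs p (hMS hp)
  obtain ⟨p, hp, q, hq, hne, hgood⟩ := hΔ.exists_goodFor hM PfCond.a fun p _ => p.a_lt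
  exact ⟨p, (hMS hp).1, q, (hMS hq).1, hne,
    (hpattern p hp).goodTwins (hpattern q hq) (hK.agree p hp q hq) (hK.disjoint hp hq hne)
      (fun _ hk _ hl hkl _ => PfCond.HasPattern.root_closed hcount hM hpattern hK hk hl hkl) hgood⟩

end Twins

section Star

theorem max_eq_of_isGreatest {α : Type*} [LinearOrder α] {s : Finset α} {a : α}
    (h : IsGreatest (s : Set α) a) : s.max = (a : WithBot α) :=
  le_antisymm (Finset.max_le fun _ hb => WithBot.coe_le_coe.2 (h.2 hb)) (Finset.le_max h.1)

variable {x y : Finset Ordinal} {ξ η : Ordinal}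

theorem ostar_eq_ite (hx : IsGreatest (x : Set Ordinal) ξ) (hy : IsGreatest (y : Set Ordinal) η) :
    ostar x y = if ξ ∈ y then x \ y else if η ∈ x then y \ x else x ∩ y := by
  simp [ostar, max_eq_of_isGreatest hx, max_eq_of_isGreatest hy]

variable {f : Ordinal → Ordinal → Set Ordinal} {p : PfCond f}

theorem PfCond.isGreatest_h (hξ : ξ ∈ p.a) : IsGreatest (p.h ξ : Set Ordinal) ξ :=
  ⟨p.h_mem ξ hξ, p.h_le ξ hξ⟩

theorem PfCond.inter_h_subset (hξ : ξ ∈ p.a) (hη : η ∈ p.a) (hne : ξ ≠ η) (hξη : ξ ∉ p.h η)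
    (hηξ : η ∉ p.h ξ) : p.h ξ ∩ p.h η ⊆ (p.i ξ η).biUnion p.h := by
  have hstar := p.star_cond ξ hξ η hη hne
  rwa [ostar_eq_ite (isGreatest_h hξ) (isGreatest_h hη), if_neg hξη, if_neg hηξ] at hstar

theorem PfCond.sdiff_h_subset (hξ : ξ ∈ p.a) (hη : η ∈ p.a) (hne : ξ ≠ η) (hξη : ξ ∈ p.h η) :
    p.h ξ \ p.h η ⊆ (p.i ξ η).biUnion p.h := by
  have hstar := p.star_cond ξ hξ η hη hne
  rwa [ostar_eq_ite (isGreatest_h hξ) (isGreatest_h hη), if_pos hξη] at hstar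

/-- `s` is an admissible value of `i {ξ, η}` in a condition with support `A` and with `h = H`. -/
structure Admissible (f : Ordinal → Ordinal → Set Ordinal) (A : Finset Ordinal)
    (H : Ordinal → Finset Ordinal) (ξ η : Ordinal) (s : Finset Ordinal) : Prop where
  subset : s ⊆ A
  mem_f : ∀ ν ∈ s, ν ∈ f ξ η
  star_subset : ostar (H ξ) (H η) ⊆ s.biUnion H

/-- The largest candidate for `i {ξ, η}` in a condition with support `A`. -/
def maxIndex (f : Ordinal → Ordinal → Set Ordinal) (A : Finset Ordinal) (ξ η : Ordinal) :
    Finset Ordinal :=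
  A.filter (· ∈ f ξ η)

theorem mem_maxIndex {A : Finset Ordinal} {ν : Ordinal} :
    ν ∈ maxIndex f A ξ η ↔ ν ∈ A ∧ ν ∈ f ξ η :=
  Finset.mem_filter

theorem maxIndex_comm (hsymm : ∀ α β, f α β = f β α) (A : Finset Ordinal) (ξ η : Ordinal) :
    maxIndex f A ξ η = maxIndex f A η ξ := by
  rw [maxIndex, maxIndex, hsymm]

end Star

section Delta

variable {f : Ordinal → Ordinal → Set Ordinal} {p q : PfCond f} {ξ η ζ δ : Ordinal}

theorem GoodFor.symm (hsymm : ∀ α β, f α β = f β α) {x y : Finset Ordinal} (h : GoodFor f x y) :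
    GoodFor f y x := fun α hα β hβ γ hγ => by
  obtain ⟨hmem, hleft, hright⟩ := h α (Finset.inter_comm y x ▸ hα) γ hγ β hβ
  rw [hsymm β γ]
  exact ⟨fun hlt => hmem hlt.symm, hsymm γ β ▸ hright, hleft⟩

/-- The part of being good twins which the amalgamation uses: `h` and `i` agree on the common
support, and the supports are good for `f`. Unlike for `GoodTwins`, symmetry is immediate. -/
structure Coherent (p q : PfCond f) : Prop where
  h_inter : ∀ ξ ∈ p.a ∩ q.a, p.h ξ ∩ q.a = q.h ξ ∩ p.a
  i_eq : ∀ ξ ∈ p.a ∩ q.a, ∀ η ∈ p.a ∩ q.a, ξ ≠ η → p.i ξ η = q.i ξ η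
  good : GoodFor f p.a q.a

theorem GoodTwins.coherent (h : GoodTwins p q) : Coherent p q := by
  obtain ⟨⟨e, hbij, -, hfix, hh, -⟩, hi, hgood⟩ := h
  refine ⟨fun ξ hξ => ?_, hi, hgood⟩
  have hξp := (Finset.mem_inter.1 hξ).1
  have hhξ : q.h ξ = (p.h ξ).image e := by rw [← hh ξ hξp, hfix ξ hξ]
  ext ζ
  rw [Finset.mem_inter, Finset.mem_inter, hhξ, Finset.mem_image]
  constructor
  · rintro ⟨hζ, hζq⟩
    have hζp := p.h_sub ξ hξp hζ
    exact ⟨⟨ζ, hζ, hfix ζ (Finset.mem_inter.2 ⟨hζp, hζq⟩)⟩, hζp⟩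
  · rintro ⟨⟨x, hx, rfl⟩, hep⟩
    have hxp := p.h_sub ξ hξp hx
    have heq : e x ∈ q.a := hbij.mapsTo hxp
    have hex : e x = x := hbij.injOn hep hxp (hfix (e x) (Finset.mem_inter.2 ⟨hep, heq⟩))
    exact ⟨hex.symm ▸ hx, heq⟩

theorem Coherent.symm (hsymm : ∀ α β, f α β = f β α) (h : Coherent p q) : Coherent q p where
  h_inter ξ hξ := (h.h_inter ξ (Finset.inter_comm q.a p.a ▸ hξ)).symm
  i_eq ξ hξ η hη hne :=
    (h.i_eq ξ (Finset.inter_comm q.a p.a ▸ hξ) η (Finset.inter_comm q.a p.a ▸ hη) hne).symm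
  good := h.good.symm hsymm

theorem Coherent.mem_h_iff (hc : Coherent p q) (hξ : ξ ∈ p.a ∩ q.a) (hζ : ζ ∈ p.a ∩ q.a) :
    ζ ∈ p.h ξ ↔ ζ ∈ q.h ξ := by
  have hinter := Finset.ext_iff.1 (hc.h_inter ξ hξ) ζ
  obtain ⟨hζp, hζq⟩ := Finset.mem_inter.1 hζ
  simpa only [Finset.mem_inter, hζp, hζq, and_true] using hinter

theorem deltaIs_comm : DeltaIs p q ζ δ ↔ DeltaIs q p ζ δ := by
  simp only [DeltaIs, Finset.inter_comm p.a, Finset.union_comm (p.h _)]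

theorem deltaIs_iff_isLeast : DeltaIs p q ζ δ ↔
    IsLeast ((p.a ∩ q.a).filter fun ε => ζ ∈ p.h ε ∪ q.h ε : Set Ordinal) δ := by
  simp only [DeltaIs, IsLeast, lowerBounds, Finset.mem_coe, Finset.mem_filter, Set.mem_ofPred_eq,
    and_imp, and_assoc]

theorem exists_deltaIs (hξ : ξ ∈ p.a ∩ q.a) (hζ : ζ ∈ p.h ξ) : ∃ δ, DeltaIs p q ζ δ := by
  have hne : ((p.a ∩ q.a).filter fun ε => ζ ∈ p.h ε ∪ q.h ε).Nonempty :=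
    ⟨ξ, Finset.mem_filter.2 ⟨hξ, Finset.mem_union_left _ hζ⟩⟩
  exact ⟨_, deltaIs_iff_isLeast.2 (Finset.isLeast_min' _ hne)⟩

namespace DeltaIs

theorem unique {ε : Ordinal} (h : DeltaIs p q ζ δ) (h' : DeltaIs p q ζ ε) : δ = ε :=
  (deltaIs_iff_isLeast.1 h).unique (deltaIs_iff_isLeast.1 h')

theorem mem_left (h : DeltaIs p q ζ δ) : δ ∈ p.a := (Finset.mem_inter.1 h.1).1

theorem mem_right (h : DeltaIs p q ζ δ) : δ ∈ q.a := (Finset.mem_inter.1 h.1).2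

theorem le_of_mem (h : DeltaIs p q ζ δ) (hξ : ξ ∈ p.a ∩ q.a) (hζ : ζ ∈ p.h ξ) : δ ≤ ξ :=
  h.2.2 ξ hξ (Finset.mem_union_left _ hζ)

theorem le (h : DeltaIs p q ζ δ) : ζ ≤ δ :=
  (Finset.mem_union.1 h.2.1).elim (p.h_le δ h.mem_left ζ) (q.h_le δ h.mem_right ζ)

theorem self (hζ : ζ ∈ p.a ∩ q.a) : DeltaIs p q ζ ζ := by
  obtain ⟨hζp, -⟩ := Finset.mem_inter.1 hζ
  refine ⟨hζ, Finset.mem_union_left _ (p.h_mem ζ hζp), fun ε hε hζε => ?_⟩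
  obtain ⟨hεp, hεq⟩ := Finset.mem_inter.1 hε
  exact (Finset.mem_union.1 hζε).elim (p.h_le ε hεp ζ) (q.h_le ε hεq ζ)

theorem mem_h (h : DeltaIs p q ζ δ) (hc : Coherent p q) (hζ : ζ ∈ p.a) : ζ ∈ p.h δ := by
  rcases Finset.mem_union.1 h.2.1 with hp | hq
  · exact hp
  · exact (hc.mem_h_iff h.1 (Finset.mem_inter.2 ⟨hζ, q.h_sub δ h.mem_right hq⟩)).2 hq

end DeltaIs

/-- The values of `i` on the common support cannot cover `ζ`: they are common to `p` and `q` and lie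
below `δ_ζ`, the least common `ν` with `ζ ∈ h ν`. -/
theorem Coherent.notMem_biUnion_i (hlt : ∀ α β, ∀ γ ∈ f α β, γ < α) (hc : Coherent p q)
    (hξ : ξ ∈ p.a ∩ q.a) (hδ : DeltaIs p q ζ δ) (hne : δ ≠ ξ) :
    ζ ∉ (p.i δ ξ).biUnion p.h := by
  intro hζ
  obtain ⟨ν, hν, hζν⟩ := Finset.mem_biUnion.1 hζ
  obtain ⟨hξp, hξq⟩ := Finset.mem_inter.1 hξ
  have hνp : ν ∈ p.a := p.i_sub_a δ hδ.mem_left ξ hξp hne hν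
  have hνq : ν ∈ q.a := q.i_sub_a δ hδ.mem_right ξ hξq hne (hc.i_eq δ hδ.1 ξ hξ hne ▸ hν)
  have hνδ : ν < δ := hlt δ ξ ν (p.i_sub_f δ hδ.mem_left ξ hξp hne ν hν)
  exact hνδ.not_ge (hδ.le_of_mem (Finset.mem_inter.2 ⟨hνp, hνq⟩) hζν)

theorem Coherent.mem_h_iff_of_deltaIs (hlt : ∀ α β, ∀ γ ∈ f α β, γ < α) (hc : Coherent p q)
    (hξ : ξ ∈ p.a ∩ q.a) (hζ : ζ ∈ p.a) (hδ : DeltaIs p q ζ δ) : ζ ∈ p.h ξ ↔ δ ∈ p.h ξ := by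
  obtain ⟨hξp, -⟩ := Finset.mem_inter.1 hξ
  have hζδ := hδ.mem_h hc hζ
  rcases eq_or_ne δ ξ with rfl | hne
  · exact iff_of_true hζδ (p.h_mem δ hξp)
  have hnot := hc.notMem_biUnion_i hlt hξ hδ hne
  constructor
  · intro hζξ
    by_contra hδξ
    have hξδ : ξ ∉ p.h δ := fun h =>
      hne (le_antisymm (hδ.le_of_mem hξ hζξ) (p.h_le δ hδ.mem_left ξ h))
    exact hnot (PfCond.inter_h_subset hδ.mem_left hξp hne hδξ hξδ (Finset.mem_inter.2 ⟨hζδ, hζξ⟩))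
  · intro hδξ
    by_contra hζξ
    exact hnot (PfCond.sdiff_h_subset hδ.mem_left hξp hne hδξ (Finset.mem_sdiff.2 ⟨hζδ, hζξ⟩))

theorem Coherent.mem_h_iff_exists_deltaIs (hlt : ∀ α β, ∀ γ ∈ f α β, γ < α) (hc : Coherent p q)
    (hξ : ξ ∈ p.a ∩ q.a) :
    ζ ∈ p.h ξ ↔ ζ ∈ p.a ∧ ∃ δ, DeltaIs p q ζ δ ∧ δ ∈ p.h ξ := by
  constructor
  · intro hζξ
    have hζ := p.h_sub ξ (Finset.mem_inter.1 hξ).1 hζξ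
    obtain ⟨δ, hδ⟩ := exists_deltaIs hξ hζξ
    exact ⟨hζ, δ, hδ, (hc.mem_h_iff_of_deltaIs hlt hξ hζ hδ).1 hζξ⟩
  · rintro ⟨hζ, δ, hδ, hδξ⟩
    exact (hc.mem_h_iff_of_deltaIs hlt hξ hζ hδ).2 hδξ

end Delta

section Amalgam

variable {f : Ordinal → Ordinal → Set Ordinal} {p q : PfCond f} {H : Ordinal → Finset Ordinal}
  {ξ η ζ δ : Ordinal}

/-- On the support of `p`, the function `H` behaves like the `h` of a common extension of `p` and
`q`: it extends `p.h`, and `H ξ` contains an element `ζ` of `q` exactly when `p.h ξ` contains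
`δ_ζ`. -/
structure IsAmalgam (p q : PfCond f) (H : Ordinal → Finset Ordinal) : Prop where
  subset : ∀ ξ ∈ p.a, H ξ ⊆ p.a ∪ q.a
  mem_iff : ∀ ξ ∈ p.a, ∀ ζ ∈ p.a, ζ ∈ H ξ ↔ ζ ∈ p.h ξ
  mem_iff_delta : ∀ ξ ∈ p.a, ∀ ζ ∈ q.a, ζ ∈ H ξ ↔ ∃ δ, DeltaIs p q ζ δ ∧ δ ∈ p.h ξ

namespace IsAmalgam

theorem congr {H' : Ordinal → Finset Ordinal} (hH : IsAmalgam p q H)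
    (heq : ∀ ξ ∈ p.a, H' ξ = H ξ) : IsAmalgam p q H' where
  subset ξ hξ := heq ξ hξ ▸ hH.subset ξ hξ
  mem_iff ξ hξ := heq ξ hξ ▸ hH.mem_iff ξ hξ
  mem_iff_delta ξ hξ := heq ξ hξ ▸ hH.mem_iff_delta ξ hξ

theorem mem_iff_of_deltaIs (hH : IsAmalgam p q H) (hξ : ξ ∈ p.a) (hζ : ζ ∈ q.a)
    (hδ : DeltaIs p q ζ δ) : ζ ∈ H ξ ↔ δ ∈ p.h ξ := by
  rw [hH.mem_iff_delta ξ hξ ζ hζ]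
  exact ⟨fun ⟨_, hε, hmem⟩ => hδ.unique hε ▸ hmem, fun hmem => ⟨δ, hδ, hmem⟩⟩

theorem inter_eq (hH : IsAmalgam p q H) (hξ : ξ ∈ p.a) : H ξ ∩ p.a = p.h ξ := by
  ext ζ
  rw [Finset.mem_inter]
  constructor
  · rintro ⟨hζ, hζp⟩
    exact (hH.mem_iff ξ hξ ζ hζp).1 hζ
  · intro hζ
    have hζp := p.h_sub ξ hξ hζ
    exact ⟨(hH.mem_iff ξ hξ ζ hζp).2 hζ, hζp⟩

theorem h_subset (hH : IsAmalgam p q H) (hξ : ξ ∈ p.a) : p.h ξ ⊆ H ξ :=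
  hH.inter_eq hξ ▸ Finset.inter_subset_left

theorem isGreatest (hH : IsAmalgam p q H) (hξ : ξ ∈ p.a) : IsGreatest (H ξ : Set Ordinal) ξ := by
  refine ⟨hH.h_subset hξ (p.h_mem ξ hξ), fun ζ hζ => ?_⟩
  rcases Finset.mem_union.1 (hH.subset ξ hξ hζ) with hζp | hζq
  · exact p.h_le ξ hξ ζ ((hH.mem_iff ξ hξ ζ hζp).1 hζ)
  · obtain ⟨δ, hδ, hδξ⟩ := (hH.mem_iff_delta ξ hξ ζ hζq).1 hζ
    exact hδ.le.trans (p.h_le ξ hξ δ hδξ)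

theorem exists_forall_mem_iff (hH : IsAmalgam p q H) (hξ : ξ ∈ p.a) (hζ : ζ ∈ H ξ) :
    ∃ τ, ∀ ν ∈ p.a, ζ ∈ H ν ↔ τ ∈ p.h ν := by
  rcases Finset.mem_union.1 (hH.subset ξ hξ hζ) with hζp | hζq
  · exact ⟨ζ, fun ν hν => hH.mem_iff ν hν ζ hζp⟩
  · obtain ⟨δ, hδ, -⟩ := (hH.mem_iff_delta ξ hξ ζ hζq).1 hζ
    exact ⟨δ, fun ν hν => hH.mem_iff_of_deltaIs hν hζq hδ⟩

theorem admissible_i (hH : IsAmalgam p q H) (hξ : ξ ∈ p.a) (hη : η ∈ p.a) (hne : ξ ≠ η) :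
    Admissible f (p.a ∪ q.a) H ξ η (p.i ξ η) := by
  have hi := p.i_sub_a ξ hξ η hη hne
  refine ⟨hi.trans Finset.subset_union_left, p.i_sub_f ξ hξ η hη hne, fun ζ hζ => ?_⟩
  have hstar := p.star_cond ξ hξ η hη hne
  rw [ostar_eq_ite (hH.isGreatest hξ) (hH.isGreatest hη)] at hζ
  simp only [hH.mem_iff η hη ξ hξ, hH.mem_iff ξ hξ η hη] at hζ
  rw [ostar_eq_ite (PfCond.isGreatest_h hξ) (PfCond.isGreatest_h hη)] at hstar
  have hζH : ζ ∈ H ξ ∨ ζ ∈ H η := by split_ifs at hζ <;> simp_all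
  obtain ⟨τ, hτ⟩ : ∃ τ, ∀ ν ∈ p.a, ζ ∈ H ν ↔ τ ∈ p.h ν :=
    hζH.elim (hH.exists_forall_mem_iff hξ) (hH.exists_forall_mem_iff hη)
  have hτi : τ ∈ (p.i ξ η).biUnion p.h := hstar <| by
    split_ifs at hζ ⊢ <;> simpa only [Finset.mem_sdiff, Finset.mem_inter, hτ ξ hξ, hτ η hη] using hζ
  obtain ⟨ν, hν, hτν⟩ := Finset.mem_biUnion.1 hτi
  exact Finset.mem_biUnion.2 ⟨ν, hν, (hτ ν (hi hν)).2 hτν⟩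

end IsAmalgam

theorem lt_of_mem_h_of_mem_sdiff (hη : η ∈ q.a \ p.a) (hδ : δ ∈ p.a) (hδη : δ ∈ q.h η) : δ < η := by
  obtain ⟨hηq, hηp⟩ := Finset.mem_sdiff.1 hη
  exact lt_of_le_of_ne (q.h_le η hηq δ hδη) (ne_of_mem_of_not_mem hδ hηp)

namespace Coherent

theorem mem_biUnion_of_delta_lt (hc : Coherent p q) (hp : IsAmalgam p q H) (hq : IsAmalgam q p H)
    (hξ : ξ ∈ p.a \ q.a) (hη : η ∈ q.a \ p.a) (hδ : DeltaIs p q ζ δ) (hδξ : δ < ξ) (hδη : δ < η) :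
    ζ ∈ (maxIndex f (p.a ∪ q.a) ξ η).biUnion H := by
  have hδf : δ ∈ f ξ η := (hc.good δ hδ.1 ξ hξ η hη).1 ⟨hδξ, hδη⟩
  have hζδ : ζ ∈ H δ := (Finset.mem_union.1 hδ.2.1).elim
    (fun h => hp.h_subset hδ.mem_left h) fun h => hq.h_subset hδ.mem_right h
  exact Finset.mem_biUnion.2
    ⟨δ, mem_maxIndex.2 ⟨Finset.mem_union_left _ hδ.mem_left, hδf⟩, hζδ⟩

theorem biUnion_i_subset (hsymm : ∀ α β, f α β = f β α) (hc : Coherent p q)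
    (hp : IsAmalgam p q H) (hξ : ξ ∈ p.a \ q.a) (hη : η ∈ q.a \ p.a) (hδ : δ ∈ p.a ∩ q.a)
    (hδη : δ < η) :
    (p.i ξ δ).biUnion p.h ⊆ (maxIndex f (p.a ∪ q.a) ξ η).biUnion H := by
  intro ζ hζ
  obtain ⟨ν, hν, hζν⟩ := Finset.mem_biUnion.1 hζ
  obtain ⟨hξp, hξq⟩ := Finset.mem_sdiff.1 hξ
  obtain ⟨hδp, hδq⟩ := Finset.mem_inter.1 hδ
  have hne : ξ ≠ δ := (ne_of_mem_of_not_mem hδq hξq).symm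
  have hνp : ν ∈ p.a := p.i_sub_a ξ hξp δ hδp hne hν
  have hνf : ν ∈ f ξ η := by
    rw [hsymm ξ η]
    exact (hc.good δ hδ ξ hξ η hη).2.2 hδη (hsymm ξ δ ▸ p.i_sub_f ξ hξp δ hδp hne ν hν)
  exact Finset.mem_biUnion.2
    ⟨ν, mem_maxIndex.2 ⟨Finset.mem_union_left _ hνp, hνf⟩, hp.h_subset hνp hζν⟩

theorem sdiff_h_subset_biUnion (hsymm : ∀ α β, f α β = f β α) (hc : Coherent p q)
    (hp : IsAmalgam p q H) (hξ : ξ ∈ p.a \ q.a) (hη : η ∈ q.a \ p.a) (hδ : DeltaIs p q ξ δ)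
    (hδη : δ < η) :
    p.h ξ \ p.h δ ⊆ (maxIndex f (p.a ∪ q.a) ξ η).biUnion H := by
  obtain ⟨hξp, hξq⟩ := Finset.mem_sdiff.1 hξ
  have hne : ξ ≠ δ := (ne_of_mem_of_not_mem hδ.mem_right hξq).symm
  exact (PfCond.sdiff_h_subset hξp hδ.mem_left hne (hδ.mem_h hc hξp)).trans
    (hc.biUnion_i_subset hsymm hp hξ hη hδ.1 hδη)

theorem mem_biUnion_of_notMem_h_delta (hsymm : ∀ α β, f α β = f β α) (hc : Coherent p q)
    (hp : IsAmalgam p q H) (hq : IsAmalgam q p H) (hξ : ξ ∈ p.a \ q.a) (hη : η ∈ q.a \ p.a)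
    (hζ : ζ ∈ p.h ξ) (hδ : DeltaIs p q ζ δ) (hδη : δ < η) (hξδ : ξ ∉ p.h δ) :
    ζ ∈ (maxIndex f (p.a ∪ q.a) ξ η).biUnion H := by
  obtain ⟨hξp, hξq⟩ := Finset.mem_sdiff.1 hξ
  rcases lt_or_ge δ ξ with hδξ | hξle
  · exact hc.mem_biUnion_of_delta_lt hp hq hξ hη hδ hδξ hδη
  have hne : ξ ≠ δ := (ne_of_mem_of_not_mem hδ.mem_right hξq).symm
  have hδhξ : δ ∉ p.h ξ := fun h => hne (le_antisymm hξle (p.h_le ξ hξp δ h))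
  have hζδ : ζ ∈ p.h δ := hδ.mem_h hc (p.h_sub ξ hξp hζ)
  exact hc.biUnion_i_subset hsymm hp hξ hη hδ.1 hδη
    (PfCond.inter_h_subset hξp hδ.mem_left hne hξδ hδhξ (Finset.mem_inter.2 ⟨hζ, hζδ⟩))

theorem sdiff_subset_biUnion (hsymm : ∀ α β, f α β = f β α) (hc : Coherent p q)
    (hp : IsAmalgam p q H) (hq : IsAmalgam q p H) (hξ : ξ ∈ p.a \ q.a) (hη : η ∈ q.a \ p.a)
    (hξη : ξ ∈ H η) : H ξ \ H η ⊆ (maxIndex f (p.a ∪ q.a) ξ η).biUnion H := by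
  intro ζ hζ
  obtain ⟨hζξ, hζη⟩ := Finset.mem_sdiff.1 hζ
  obtain ⟨hξp, hξq⟩ := Finset.mem_sdiff.1 hξ
  have hηq := (Finset.mem_sdiff.1 hη).1
  rcases Finset.mem_union.1 (hp.subset ξ hξp hζξ) with hζp | hζq
  · obtain ⟨δ, hδ', hδη⟩ := (hq.mem_iff_delta η hηq ξ hξp).1 hξη
    have hδ : DeltaIs p q ξ δ := deltaIs_comm.2 hδ'
    have hδlt : δ < η := lt_of_mem_h_of_mem_sdiff hη hδ.mem_left hδη
    have hζh : ζ ∈ p.h ξ := (hp.mem_iff ξ hξp ζ hζp).1 hζξ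
    by_cases hζδ : ζ ∈ p.h δ
    · obtain ⟨ε, hε⟩ := exists_deltaIs hδ.1 hζδ
      have hεη : ε ∉ q.h η := fun h =>
        hζη ((hq.mem_iff_of_deltaIs hηq hζp (deltaIs_comm.1 hε)).2 h)
      have hεδ : ε < δ :=
        lt_of_le_of_ne (hε.le_of_mem hδ.1 hζδ) (ne_of_mem_of_not_mem hδη hεη).symm
      have hξε : ξ ∉ p.h ε := fun h => hεδ.not_ge (hδ.le_of_mem hε.1 h)
      exact hc.mem_biUnion_of_notMem_h_delta hsymm hp hq hξ hη hζh hε (hεδ.trans hδlt) hξε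
    · exact hc.sdiff_h_subset_biUnion hsymm hp hξ hη hδ hδlt (Finset.mem_sdiff.2 ⟨hζh, hζδ⟩)
  · obtain ⟨ε, hε, hεξ⟩ := (hp.mem_iff_delta ξ hξp ζ hζq).1 hζξ
    have hεlt : ε < ξ := lt_of_mem_h_of_mem_sdiff hξ hε.mem_right hεξ
    have hξlt : ξ < η := lt_of_le_of_ne ((hq.isGreatest hηq).2 hξη)
      (ne_of_mem_of_not_mem hηq hξq).symm
    exact hc.mem_biUnion_of_delta_lt hp hq hξ hη hε hεlt (hεlt.trans hξlt)

theorem mem_biUnion_of_mem_inter (hsymm : ∀ α β, f α β = f β α) (hc : Coherent p q)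
    (hp : IsAmalgam p q H) (hq : IsAmalgam q p H) (hξ : ξ ∈ p.a \ q.a) (hη : η ∈ q.a \ p.a)
    (hξη : ξ ∉ H η) (hζp : ζ ∈ p.a) (hζξ : ζ ∈ H ξ) (hζη : ζ ∈ H η) :
    ζ ∈ (maxIndex f (p.a ∪ q.a) ξ η).biUnion H := by
  have hξp := (Finset.mem_sdiff.1 hξ).1
  have hηq := (Finset.mem_sdiff.1 hη).1
  have hζh : ζ ∈ p.h ξ := (hp.mem_iff ξ hξp ζ hζp).1 hζξ
  obtain ⟨ε, hε', hεη⟩ := (hq.mem_iff_delta η hηq ζ hζp).1 hζη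
  have hε : DeltaIs p q ζ ε := deltaIs_comm.2 hε'
  have hεlt : ε < η := lt_of_mem_h_of_mem_sdiff hη hε.mem_left hεη
  by_cases hξε : ξ ∈ p.h ε
  · obtain ⟨δ, hδ⟩ := exists_deltaIs hε.1 hξε
    have hδη : δ ∉ q.h η := fun h =>
      hξη ((hq.mem_iff_of_deltaIs hηq hξp (deltaIs_comm.1 hδ)).2 h)
    have hδε : δ < ε :=
      lt_of_le_of_ne (hδ.le_of_mem hε.1 hξε) (ne_of_mem_of_not_mem hεη hδη).symm
    have hζδ : ζ ∉ p.h δ := fun h => hδε.not_ge (hε.le_of_mem hδ.1 h)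
    exact hc.sdiff_h_subset_biUnion hsymm hp hξ hη hδ (hδε.trans hεlt)
      (Finset.mem_sdiff.2 ⟨hζh, hζδ⟩)
  · exact hc.mem_biUnion_of_notMem_h_delta hsymm hp hq hξ hη hζh hε hεlt hξε

theorem admissible_maxIndex (hsymm : ∀ α β, f α β = f β α) (hc : Coherent p q)
    (hp : IsAmalgam p q H) (hq : IsAmalgam q p H) (hξ : ξ ∈ p.a \ q.a) (hη : η ∈ q.a \ p.a) :
    Admissible f (p.a ∪ q.a) H ξ η (maxIndex f (p.a ∪ q.a) ξ η) := by
  refine ⟨Finset.filter_subset _ _, fun ν hν => (mem_maxIndex.1 hν).2, ?_⟩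
  have hξp := (Finset.mem_sdiff.1 hξ).1
  have hηq := (Finset.mem_sdiff.1 hη).1
  have hswap : maxIndex f (p.a ∪ q.a) ξ η = maxIndex f (q.a ∪ p.a) η ξ := by
    rw [maxIndex_comm hsymm, Finset.union_comm]
  rw [ostar_eq_ite (hp.isGreatest hξp) (hq.isGreatest hηq)]
  split_ifs with hξη hηξ
  · exact hc.sdiff_subset_biUnion hsymm hp hq hξ hη hξη
  · rw [hswap]
    exact (hc.symm hsymm).sdiff_subset_biUnion hsymm hq hp hη hξ hηξ
  · intro ζ hζ
    obtain ⟨hζξ, hζη⟩ := Finset.mem_inter.1 hζ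
    rcases Finset.mem_union.1 (hp.subset ξ hξp hζξ) with hζp | hζq
    · exact hc.mem_biUnion_of_mem_inter hsymm hp hq hξ hη hξη hζp hζξ hζη
    · rw [hswap]
      exact (hc.symm hsymm).mem_biUnion_of_mem_inter hsymm hq hp hη hξ hηξ hζq hζη hζξ

end Coherent

/-- The value at `ξ ∈ a^p` of the `h` of the amalgamation: `p.h ξ` together with the elements `ζ`
of `q` such that `δ_ζ ∈ p.h ξ`. -/
def extendH (p q : PfCond f) (ξ : Ordinal) : Finset Ordinal :=
  p.h ξ ∪ q.a.filter fun ζ => ∃ δ, DeltaIs p q ζ δ ∧ δ ∈ p.h ξ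

theorem mem_extendH :
    ζ ∈ extendH p q ξ ↔ ζ ∈ p.h ξ ∨ ζ ∈ q.a ∧ ∃ δ, DeltaIs p q ζ δ ∧ δ ∈ p.h ξ := by
  rw [extendH, Finset.mem_union, Finset.mem_filter]

theorem isAmalgam_extendH (p q : PfCond f) : IsAmalgam p q (extendH p q) where
  subset ξ hξ := Finset.union_subset_union (p.h_sub ξ hξ) (Finset.filter_subset _ _)
  mem_iff ξ _ ζ hζp := by
    rw [mem_extendH]
    refine or_iff_left_of_imp ?_
    rintro ⟨hζq, δ, hδ, hδξ⟩
    rwa [(DeltaIs.self (Finset.mem_inter.2 ⟨hζp, hζq⟩)).unique hδ]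
  mem_iff_delta ξ hξ ζ hζq := by
    rw [mem_extendH, and_iff_right hζq]
    exact or_iff_right_of_imp fun hζ =>
      ⟨ζ, .self (Finset.mem_inter.2 ⟨p.h_sub ξ hξ hζ, hζq⟩), hζ⟩

theorem Coherent.extendH_eq_union (hsymm : ∀ α β, f α β = f β α)
    (hlt : ∀ α β, ∀ γ ∈ f α β, γ < α) (hc : Coherent p q) (hξ : ξ ∈ p.a ∩ q.a) :
    extendH p q ξ = p.h ξ ∪ q.h ξ := by
  ext ζ
  rw [mem_extendH, Finset.mem_union,
    (hc.symm hsymm).mem_h_iff_exists_deltaIs hlt (Finset.inter_comm p.a q.a ▸ hξ)]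
  refine or_congr_right (and_congr_right fun _ => exists_congr fun δ => ?_)
  rw [deltaIs_comm (p := q)]
  exact and_congr_right fun hδ => hc.mem_h_iff hξ hδ.1

/-- The function `h` of the amalgamation of `p` and `q`. -/
def amalgamH (p q : PfCond f) (ξ : Ordinal) : Finset Ordinal :=
  if ξ ∈ p.a then extendH p q ξ else extendH q p ξ

theorem isAmalgam_amalgamH (p q : PfCond f) : IsAmalgam p q (amalgamH p q) :=
  (isAmalgam_extendH p q).congr fun _ hξ => if_pos hξ

theorem Coherent.isAmalgam_amalgamH_swap (hsymm : ∀ α β, f α β = f β α)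
    (hlt : ∀ α β, ∀ γ ∈ f α β, γ < α) (hc : Coherent p q) : IsAmalgam q p (amalgamH p q) := by
  refine (isAmalgam_extendH q p).congr fun ξ hξq => ?_
  by_cases hξp : ξ ∈ p.a
  · rw [amalgamH, if_pos hξp, hc.extendH_eq_union hsymm hlt (Finset.mem_inter.2 ⟨hξp, hξq⟩),
      (hc.symm hsymm).extendH_eq_union hsymm hlt (Finset.mem_inter.2 ⟨hξq, hξp⟩),
      Finset.union_comm]
  · exact if_neg hξp

/-- The function `i` of the amalgamation of `p` and `q`: it extends `p.i` and `q.i`, and it is as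
large as possible on the remaining pairs. -/
def amalgamI (p q : PfCond f) (ξ η : Ordinal) : Finset Ordinal :=
  if ξ ∈ p.a ∧ η ∈ p.a then p.i ξ η
  else if ξ ∈ q.a ∧ η ∈ q.a then q.i ξ η
  else maxIndex f (p.a ∪ q.a) ξ η

theorem amalgamI_comm (hsymm : ∀ α β, f α β = f β α) (p q : PfCond f) (ξ η : Ordinal) :
    amalgamI p q ξ η = amalgamI p q η ξ := by
  simp only [amalgamI, p.i_symm ξ η, q.i_symm ξ η, maxIndex_comm hsymm _ ξ η, and_comm]

theorem amalgamI_of_left (hξ : ξ ∈ p.a) (hη : η ∈ p.a) : amalgamI p q ξ η = p.i ξ η :=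
  if_pos ⟨hξ, hη⟩

theorem Coherent.amalgamI_of_right (hc : Coherent p q) (hξ : ξ ∈ q.a) (hη : η ∈ q.a)
    (hne : ξ ≠ η) : amalgamI p q ξ η = q.i ξ η := by
  by_cases hp : ξ ∈ p.a ∧ η ∈ p.a
  · rw [amalgamI_of_left hp.1 hp.2, hc.i_eq ξ (Finset.mem_inter.2 ⟨hp.1, hξ⟩) η
      (Finset.mem_inter.2 ⟨hp.2, hη⟩) hne]
  · rw [amalgamI, if_neg hp, if_pos ⟨hξ, hη⟩]

theorem Coherent.admissible_amalgamI (hsymm : ∀ α β, f α β = f β α)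
    (hlt : ∀ α β, ∀ γ ∈ f α β, γ < α) (hc : Coherent p q) (hξ : ξ ∈ p.a ∪ q.a)
    (hη : η ∈ p.a ∪ q.a) (hne : ξ ≠ η) :
    Admissible f (p.a ∪ q.a) (amalgamH p q) ξ η (amalgamI p q ξ η) := by
  have hp := isAmalgam_amalgamH p q
  have hq := hc.isAmalgam_amalgamH_swap hsymm hlt
  by_cases hpp : ξ ∈ p.a ∧ η ∈ p.a
  · rw [amalgamI_of_left hpp.1 hpp.2]
    exact hp.admissible_i hpp.1 hpp.2 hne
  by_cases hqq : ξ ∈ q.a ∧ η ∈ q.a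
  · rw [hc.amalgamI_of_right hqq.1 hqq.2 hne, Finset.union_comm]
    exact hq.admissible_i hqq.1 hqq.2 hne
  rw [amalgamI, if_neg hpp, if_neg hqq]
  have hsides : ξ ∈ p.a \ q.a ∧ η ∈ q.a \ p.a ∨ ξ ∈ q.a \ p.a ∧ η ∈ p.a \ q.a := by
    simp only [Finset.mem_union, Finset.mem_sdiff] at hξ hη ⊢
    tauto
  rcases hsides with ⟨hξp, hηq⟩ | ⟨hξq, hηp⟩
  · exact hc.admissible_maxIndex hsymm hp hq hξp hηq
  · rw [Finset.union_comm]
    exact (hc.symm hsymm).admissible_maxIndex hsymm hq hp hξq hηp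

/-- The amalgamation of two coherent conditions, a condition with support `a^p ∪ a^q`. -/
def Coherent.amalgam (hsymm : ∀ α β, f α β = f β α) (hlt : ∀ α β, ∀ γ ∈ f α β, γ < α)
    (hc : Coherent p q) : PfCond f where
  a := p.a ∪ q.a
  h := amalgamH p q
  i := amalgamI p q
  a_lt ξ hξ := (Finset.mem_union.1 hξ).elim (p.a_lt ξ) (q.a_lt ξ)
  h_sub ξ hξ := (Finset.mem_union.1 hξ).elim ((isAmalgam_amalgamH p q).subset ξ) fun hξq =>
    Finset.union_comm q.a p.a ▸ (hc.isAmalgam_amalgamH_swap hsymm hlt).subset ξ hξq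
  h_mem _ hξ := (Finset.mem_union.1 hξ).elim
    (fun hξp => ((isAmalgam_amalgamH p q).isGreatest hξp).1)
    fun hξq => ((hc.isAmalgam_amalgamH_swap hsymm hlt).isGreatest hξq).1
  h_le _ hξ _ hη := (Finset.mem_union.1 hξ).elim
    (fun hξp => ((isAmalgam_amalgamH p q).isGreatest hξp).2 hη)
    fun hξq => ((hc.isAmalgam_amalgamH_swap hsymm hlt).isGreatest hξq).2 hη
  i_symm := amalgamI_comm hsymm p q
  i_sub_f _ hξ _ hη hne := (hc.admissible_amalgamI hsymm hlt hξ hη hne).mem_f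
  i_sub_a _ hξ _ hη hne := (hc.admissible_amalgamI hsymm hlt hξ hη hne).subset
  star_cond _ hξ _ hη hne := (hc.admissible_amalgamI hsymm hlt hξ hη hne).star_subset

theorem Coherent.compatible (hsymm : ∀ α β, f α β = f β α) (hlt : ∀ α β, ∀ γ ∈ f α β, γ < α)
    (hc : Coherent p q) : ∃ r : PfCond f, PfLe r p ∧ PfLe r q :=
  ⟨hc.amalgam hsymm hlt,
    ⟨Finset.subset_union_left, fun _ => (isAmalgam_amalgamH p q).inter_eq,
      fun _ hξ _ hη _ => amalgamI_of_left hξ hη⟩,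
    ⟨Finset.subset_union_right, fun _ => (hc.isAmalgam_amalgamH_swap hsymm hlt).inter_eq,
      fun _ hξ _ hη hne => hc.amalgamI_of_right hξ hη hne⟩⟩

end Amalgam

theorem stmt14
    (f : Ordinal → Ordinal → Set Ordinal)
    (hsymm : ∀ α β, f α β = f β α)
    (hlt : ∀ α β γ, γ ∈ f α β → γ < α ∧ γ < β)
    (hcount : ∀ α β, (f α β).Countable)
    (hΔ : IsDeltaFunction f)
    (F : Set (PfCond f)) (hF : ¬ F.Countable) :
    ∃ p ∈ F, ∃ q ∈ F, p ≠ q ∧ GoodTwins p q ∧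
      ∃ r : PfCond f, PfLe r p ∧ PfLe r q := by
  obtain ⟨p, hp, q, hq, hne, htwins⟩ := exists_goodTwins hcount hΔ hF
  exact ⟨p, hp, q, hq, hne, htwins,
    htwins.coherent.compatible hsymm fun α β γ hγ => (hlt α β γ hγ).1⟩
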